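/- arXiv:1007.1178 — 2 statements merged into one kernel-verified Lean document; each statement's English description precedes it below -/
import Mathlib

section
/- Let H₀, H₁, …, H_k be a wire of 7-suns and let G be a preimage of the wire. Then for each i, the subgraph T⁻¹(H_i) of G is isomorphic to the 7-wheel W₇ or the squared 7-cycle C₇², and T⁻¹(H_i) is isomorphic to T⁻¹(H₀) if and only if i is even. -/
open SimpleGraph

/-- The triangular line graph `T(G)` of a graph `G`: vertices are the edges of `G`,
with two edges adjacent iff they share an endpoint and lie in a common triangle. -/
def TriLine {V : Type*} (G : SimpleGraph V) : SimpleGraph G.edgeSet where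
  Adj e₁ e₂ := ∃ u v w : V, G.Adj u v ∧ G.Adj v w ∧ G.Adj u w ∧
      (e₁ : Sym2 V) = s(u, v) ∧ (e₂ : Sym2 V) = s(v, w)
  symm := by
    constructor
    rintro e₁ e₂ ⟨u, v, w, huv, hvw, huw, h₁, h₂⟩
    exact ⟨w, v, u, hvw.symm, huv.symm, huw.symm, by rw [h₂]; exact Sym2.eq_swap,
      by rw [h₁]; exact Sym2.eq_swap⟩
  loopless := by
    constructor
    rintro e ⟨u, v, w, huv, hvw, huw, h₁, h₂⟩
    rw [h₁, Sym2.eq_iff] at h₂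
    rcases h₂ with ⟨h, _⟩ | ⟨h, _⟩
    · exact huv.ne h
    · exact huw.ne h

/-- `H` is a triangular line graph: it is isomorphic to `T(G)` for some finite graph `G`. -/
def IsTriLineGraph {W : Type*} (H : SimpleGraph W) : Prop :=
  ∃ (V : Type) (_ : Fintype V) (G : SimpleGraph V), Nonempty (TriLine G ≃g H)

/-- Given a preimage `G` of `H` (via the isomorphism `f : T(G) ≃g H`) and a set `S` of
vertices of `H`, this is the subgraph of `G` consisting of the edges of `G` corresponding
to the vertices in `S` (together with their endpoints); i.e. `T⁻¹(S)`. -/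
def edgePre {V W : Type*} (G : SimpleGraph V) {H : SimpleGraph W}
    (f : TriLine G ≃g H) (S : Set W) : G.Subgraph where
  verts := {v | ∃ (u : V) (e : G.edgeSet), (e : Sym2 V) = s(v, u) ∧ (f e : W) ∈ S}
  Adj a b := G.Adj a b ∧ ∃ e : G.edgeSet, (e : Sym2 V) = s(a, b) ∧ (f e : W) ∈ S
  adj_sub h := h.1
  edge_vert := by
    rintro a b ⟨h, e, he, hS⟩
    exact ⟨b, e, he, hS⟩
  symm := by
    constructor
    rintro a b ⟨h, e, he, hS⟩
    exact ⟨h.symm, e, he.trans Sym2.eq_swap, hS⟩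

/-- `A` occurs as a (not necessarily induced) subgraph of `B`. -/
def HasSubgraphIso {α β : Type*} (A : SimpleGraph α) (B : SimpleGraph β) : Prop :=
  ∃ f : α → β, Function.Injective f ∧ ∀ a b, A.Adj a b → B.Adj (f a) (f b)

/-- Glue a graph along an identification relation `R`: the quotient graph on
the quotient of the vertex set by the equivalence generated by `R`. -/
def Glue {ι : Type*} (G : SimpleGraph ι) (R : ι → ι → Prop) :
    SimpleGraph (Quotient (Relation.EqvGen.setoid R)) :=
  SimpleGraph.fromRel (fun x y => ∃ a b : ι, G.Adj a b ∧ x = Quotient.mk _ a ∧ y = Quotient.mk _ b)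

/-- The `k`-wheel: a `k`-cycle plus a dominating center vertex (`none`). -/
def wheelGraph (k : ℕ) : SimpleGraph (Option (ZMod k)) :=
  SimpleGraph.fromRel (fun a b =>
    (∃ i : ZMod k, a = some i ∧ b = some (i + 1)) ∨ (a = none ∧ b ≠ none))

/-- The squared `k`-cycle: a `k`-cycle plus edges between vertices at distance two. -/
def squaredCycleGraph (k : ℕ) : SimpleGraph (ZMod k) :=
  SimpleGraph.fromRel (fun i j => j = i + 1 ∨ j = i + 2)

/-- The `k`-sun: a `k`-cycle (the `Sum.inl` vertices), with a new vertex (`Sum.inr i`)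
for each cycle edge `{i, i+1}`, adjacent to both its endpoints. -/
def sunGraph (k : ℕ) : SimpleGraph (ZMod k ⊕ ZMod k) :=
  SimpleGraph.fromRel (fun a b => ∃ i : ZMod k,
    (a = Sum.inl i ∧ b = Sum.inl (i + 1)) ∨
    (a = Sum.inr i ∧ b = Sum.inl i) ∨
    (a = Sum.inr i ∧ b = Sum.inl (i + 1)))

/-- Vertex type of a 7-sun: `Sum.inl i` are the cycle vertices `cᵢ`, and `Sum.inr i` is
the degree-two vertex `pᵢ` attached to the cycle edge `{cᵢ, cᵢ₊₁}`. -/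
abbrev SunV : Type := ZMod 7 ⊕ ZMod 7

/-- `k + 1` disjoint copies `H₀, …, H_k` of the 7-sun. -/
def wireBase (k : ℕ) : SimpleGraph (Fin (k + 1) × SunV) :=
  SimpleGraph.fromRel (fun a b => a.1 = b.1 ∧ (sunGraph 7).Adj a.2 b.2)

/-- The wire identifications: for each `i`, the ROOT bowtie `{c₀,c₁,c₂,p₀,p₁}`
(center `c₁`) of `H_{i+1}` is identified with the NOT-attachment bowtie
`{c₄,c₅,c₆,p₄,p₅}` (center `c₅`) of `H_i` via a NOT gadget: centers `c₅ ~ c₁'`;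
one pair of triangles on-on: `c₄ ~ c₀'`, `p₄ ~ p₀'`; the other pair crossed:
`p₅ ~ c₂'`, `c₆ ~ p₁'`. -/
def wireRel (k : ℕ) : (Fin (k + 1) × SunV) → (Fin (k + 1) × SunV) → Prop := fun x y =>
  ∃ i : Fin k,
    (x = (i.castSucc, Sum.inl 5) ∧ y = (i.succ, Sum.inl 1)) ∨
    (x = (i.castSucc, Sum.inl 4) ∧ y = (i.succ, Sum.inl 0)) ∨
    (x = (i.castSucc, Sum.inr 4) ∧ y = (i.succ, Sum.inr 0)) ∨
    (x = (i.castSucc, Sum.inr 5) ∧ y = (i.succ, Sum.inl 2)) ∨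
    (x = (i.castSucc, Sum.inl 6) ∧ y = (i.succ, Sum.inr 1))

/-- The wire `H₀, H₁, …, H_k`: a chain of `k + 1` 7-suns, each attached at its ROOT
bowtie to its predecessor via a NOT gadget. -/
def wireGraph (k : ℕ) : SimpleGraph (Quotient (Relation.EqvGen.setoid (wireRel k))) :=
  Glue (wireBase k) (wireRel k)

/-- The vertices of the wire coming from the `i`-th 7-sun `H_i`. -/
def wireVerts (k : ℕ) (i : Fin (k + 1)) :
    Set (Quotient (Relation.EqvGen.setoid (wireRel k))) :=
  Set.range (fun v : SunV => Quotient.mk _ (i, v))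

/-!
The edges of a preimage of the `k`-sun form a closed strip of `k` triangles. Its rim edges are
distinct, and no two of them lie in a common triangle, because the added vertices of the sun are
independent. Let `k = 7`. If the strip is an annulus, its two rims have total length `7` and each of
them has length `0` or at least `4`, so one rim is a point and the strip is a wheel. If it is a
Möbius band, the ends of each rung cut the rim into two arcs of length at least `3`, which forces
lengths `3` and `4`; hence the two sides advance alternately and the strip is a squared cycle.

The edges that represent the cycle vertices `c₀` and `c₂` meet in the wheel but not in the squared
cycle, whereas those of `c₄` and `p₅` meet in the squared cycle but not in the wheel. The NOT gadget
identifies `c₄` with `c₀` and `p₅` with `c₂`, so consecutive suns have preimages of different types.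
-/

section TriangleStrip

variable {k : ℕ} {V : Type*} {e : ZMod k ⊕ ZMod k → Sym2 V} {v x y : ZMod k → V} {a b : ℕ → V}

/-- The edges `e` of a preimage of the `k`-sun form a closed strip of `k` triangles
`v j, x j, y j`: consecutive triangles share a rung `e (.inl _)`, `v j` is the common endpoint
of the two rungs of triangle `j`, and `e (.inr j)` is its third edge, on the rim. -/
structure IsTriangleStrip (e : ZMod k ⊕ ZMod k → Sym2 V) (v x y : ZMod k → V) : Prop where
  rung (j : ZMod k) : e (.inl j) = s(v j, x j)
  rung_succ (j : ZMod k) : e (.inl (j + 1)) = s(v j, y j)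
  rim (j : ZMod k) : e (.inr j) = s(x j, y j)
  injective : Function.Injective e
  not_isDiag (u : ZMod k ⊕ ZMod k) : ¬ (e u).IsDiag
  rim_triangle_free (i j : ZMod k) (u : ZMod k ⊕ ZMod k) (p q r : V) :
    e (.inr i) = s(p, q) → e (.inr j) = s(q, r) → e u ≠ s(p, r)

/-- The two sides `a`, `b` of a triangle strip, unrolled to `ℕ`: at each step one side stays at
the pivot `v t` while the other one moves along the rim from `x t` to `y t`. -/
def IsUnrolling (v x y : ZMod k → V) (a b : ℕ → V) : Prop :=
  ∀ t : ℕ, (a t = v t ∧ a (t + 1) = v t ∧ b t = x t ∧ b (t + 1) = y t) ∨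
    (b t = v t ∧ b (t + 1) = v t ∧ a t = x t ∧ a (t + 1) = y t)

open Classical in
/-- The number of times the side `a` moves during the `l` steps that start at time `n`. -/
noncomputable def moveCount (v : ZMod k → V) (a : ℕ → V) (n l : ℕ) : ℕ :=
  Nat.count (fun t ↦ a (n + t) ≠ v ((n + t : ℕ) : ZMod k)) l

open Classical in
theorem moveCount_succ (v : ZMod k → V) (a : ℕ → V) (n l : ℕ) :
    moveCount v a n (l + 1) =
      moveCount v a n l + if a (n + l) = v ((n + l : ℕ) : ZMod k) then 0 else 1 := by
  simp only [moveCount, Nat.count_succ, ne_eq, ite_not]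

open Classical in
theorem moveCount_succ' (v : ZMod k → V) (a : ℕ → V) (n l : ℕ) :
    moveCount v a n (l + 1) = moveCount v a (n + 1) l + if a n = v n then 0 else 1 := by
  simp only [moveCount, Nat.count_succ', ne_eq, ite_not, add_zero]
  simp only [Nat.add_comm, Nat.add_left_comm]

theorem moveCount_eq_zero_iff {n l : ℕ} :
    moveCount v a n l = 0 ↔ ∀ t < l, a (n + t) = v ((n + t : ℕ) : ZMod k) := by
  simp only [moveCount, Nat.count_iff_forall_not, not_not]

namespace IsTriangleStrip

theorem pivot_ne_tail (h : IsTriangleStrip e v x y) (j : ZMod k) : v j ≠ x j := by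
  simpa only [h.rung, Sym2.mk_isDiag_iff] using h.not_isDiag (.inl j)

theorem pivot_succ (h : IsTriangleStrip e v x y) (j : ZMod k) :
    (v (j + 1) = v j ∧ x (j + 1) = y j) ∨ (v (j + 1) = y j ∧ x (j + 1) = v j) :=
  Sym2.eq_iff.1 ((h.rung (j + 1)).symm.trans (h.rung_succ j))

theorem exists_isUnrolling (h : IsTriangleStrip e v x y) : ∃ a b, IsUnrolling v x y a b := by
  classical
  obtain ⟨a, ha_zero, ha_succ⟩ : ∃ a : ℕ → V, a 0 = v 0 ∧
      ∀ t : ℕ, a (t + 1) = if a t = v t then v t else y t :=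
    ⟨Nat.rec (v 0) fun (t : ℕ) (p : V) ↦ if p = v t then v t else y t, rfl, fun _ ↦ rfl⟩
  have ha (t : ℕ) : a t = v t ∨ a t = x t := by
    cases t with
    | zero => exact .inl (by rw [ha_zero, Nat.cast_zero])
    | succ t =>
      rw [ha_succ, Nat.cast_succ]
      grind [h.pivot_succ t]
  refine ⟨a, fun t ↦ if a t = v (t : ZMod k) then x t else v t, fun t ↦ ?_⟩
  have hne : v t ≠ y t := by
    simpa only [h.rung_succ, Sym2.mk_isDiag_iff] using h.not_isDiag (.inl (t + 1))
  simp only [ha_succ, Nat.cast_succ]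
  grind [h.pivot_succ t]

end IsTriangleStrip

namespace IsUnrolling

theorem symm (hab : IsUnrolling v x y a b) : IsUnrolling v x y b a := fun t ↦ (hab t).symm

theorem rung_eq (hab : IsUnrolling v x y a b) (h : IsTriangleStrip e v x y) (t : ℕ) :
    e (.inl t) = s(a t, b t) := by
  rw [h.rung]
  rcases hab t with ⟨ha, -, hb, -⟩ | ⟨hb, -, ha, -⟩
  · rw [ha, hb]
  · rw [ha, hb, Sym2.eq_swap]

theorem side_ne (hab : IsUnrolling v x y a b) (h : IsTriangleStrip e v x y) (t : ℕ) :
    a t ≠ b t := by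
  simpa only [hab.rung_eq h, Sym2.mk_isDiag_iff] using h.not_isDiag (.inl t)

theorem stays_iff (hab : IsUnrolling v x y a b) (h : IsTriangleStrip e v x y) (t : ℕ) :
    a t = v t ↔ b t ≠ v t := by
  have hne := h.pivot_ne_tail t
  grind [hab t]

theorem succ_eq_of_stays (hab : IsUnrolling v x y a b) (h : IsTriangleStrip e v x y) {t : ℕ}
    (ha : a t = v t) : a (t + 1) = a t := by
  have hne := h.pivot_ne_tail t
  grind [hab t]

theorem rim_eq_of_moves (hab : IsUnrolling v x y a b) (h : IsTriangleStrip e v x y) {t : ℕ}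
    (ha : a t ≠ v t) : e (.inr t) = s(a t, a (t + 1)) := by
  rw [h.rim]
  grind [hab t]

theorem moveCount_add_moveCount (hab : IsUnrolling v x y a b) (h : IsTriangleStrip e v x y)
    (n l : ℕ) : moveCount v a n l + moveCount v b n l = l := by
  induction l with
  | zero => rfl
  | succ l ih =>
    have hexcl := hab.stays_iff h (n + l)
    rw [moveCount_succ, moveCount_succ]
    by_cases hb : b (n + l) = v ((n + l : ℕ) : ZMod k)
    · rw [if_pos hb, if_neg fun ha ↦ hexcl.1 ha hb]
      lia
    · rw [if_neg hb, if_pos (hexcl.2 hb)]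
      lia

theorem eq_of_moveCount_eq_zero (hab : IsUnrolling v x y a b) (h : IsTriangleStrip e v x y)
    {n l : ℕ} (hl : moveCount v a n l = 0) : a (n + l) = a n := by
  rw [moveCount_eq_zero_iff] at hl
  induction l with
  | zero => rfl
  | succ l ih =>
    exact (hab.succ_eq_of_stays h (hl l l.lt_succ_self)).trans
      (ih fun t ht ↦ hl t (ht.trans l.lt_succ_self))

theorem exists_first_move (hab : IsUnrolling v x y a b) (h : IsTriangleStrip e v x y)
    {n l d : ℕ} (hd : moveCount v a n l = d + 1) :
    ∃ s l', s + 1 + l' = n + l ∧ n ≤ s ∧ e (.inr s) = s(a n, a (s + 1)) ∧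
      moveCount v a (s + 1) l' = d := by
  induction l generalizing n with
  | zero => exact absurd hd (Nat.succ_ne_zero d).symm
  | succ l ih =>
    rw [moveCount_succ'] at hd
    by_cases ha : a n = v n
    · rw [if_pos ha] at hd
      obtain ⟨s, l', hs, hns, hrim, hl'⟩ := ih hd
      rw [hab.succ_eq_of_stays h ha] at hrim
      exact ⟨s, l', by lia, by lia, hrim, hl'⟩
    · rw [if_neg ha] at hd
      exact ⟨n, l, by lia, le_rfl, hab.rim_eq_of_moves h ha, by lia⟩

/-- With one or two moves, the rung at time `n` would coincide with a rim edge or close a triangle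
with two rim edges. -/
theorem three_le_moveCount (hab : IsUnrolling v x y a b) (h : IsTriangleStrip e v x y)
    {n : ℕ} (hn : a (n + k) = b n) : 3 ≤ moveCount v a n k := by
  have hrung : e (.inl n) = s(a n, a (n + k)) := hn ▸ hab.rung_eq h n
  by_contra! hlt
  interval_cases hd : moveCount v a n k
  · exact hab.side_ne h n ((hab.eq_of_moveCount_eq_zero h hd).symm.trans hn)
  · obtain ⟨s, l, hs, -, hrim, hl⟩ := hab.exists_first_move h hd
    rw [← hab.eq_of_moveCount_eq_zero h hl, hs, ← hrung] at hrim
    exact Sum.inr_ne_inl (h.injective hrim)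
  · obtain ⟨s, l, hs, -, hrim, hl⟩ := hab.exists_first_move h hd
    obtain ⟨r, m, hr, -, hrim', hm⟩ := hab.exists_first_move h hl
    rw [← hab.eq_of_moveCount_eq_zero h hm, hr, hs] at hrim'
    exact h.rim_triangle_free s r _ _ _ _ hrim hrim' hrung

/-- With one, two or three moves, the side `a` would close up to a loop, a doubled edge or a
triangle of rim edges. -/
theorem moveCount_eq_zero_or_four_le (hab : IsUnrolling v x y a b) (h : IsTriangleStrip e v x y)
    {n : ℕ} (hn : a (n + k) = a n) : moveCount v a n k = 0 ∨ 4 ≤ moveCount v a n k := by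
  by_contra! ⟨hpos, hlt⟩
  interval_cases hd : moveCount v a n k
  · exact hpos rfl
  · obtain ⟨s, l, hs, -, hrim, hl⟩ := hab.exists_first_move h hd
    rw [← hab.eq_of_moveCount_eq_zero h hl, hs, hn] at hrim
    exact h.not_isDiag (.inr s) (hrim ▸ rfl)
  · obtain ⟨s, l, hs, hns, hrim, hl⟩ := hab.exists_first_move h hd
    obtain ⟨r, m, hr, hsr, hrim', hm⟩ := hab.exists_first_move h hl
    rw [← hab.eq_of_moveCount_eq_zero h hm, hr, hs, hn, Sym2.eq_swap, ← hrim] at hrim'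
    have hmod : (r : ZMod k) = s := Sum.inr_injective (h.injective hrim')
    rw [ZMod.natCast_eq_natCast_iff] at hmod
    have := hmod.eq_of_abs_lt (by rw [abs_lt]; lia)
    lia
  · obtain ⟨s, l, hs, -, hrim, hl⟩ := hab.exists_first_move h hd
    obtain ⟨r, m, hr, -, hrim', hm⟩ := hab.exists_first_move h hl
    obtain ⟨q, p, hq, -, hrim'', hp⟩ := hab.exists_first_move h hm
    rw [← hab.eq_of_moveCount_eq_zero h hp, hq, hr, hs, hn, Sym2.eq_swap] at hrim''
    exact h.rim_triangle_free s r _ _ _ _ hrim hrim' hrim''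

theorem add_period_of_twist (hab : IsUnrolling v x y a b) (h : IsTriangleStrip e v x y)
    (ha : a k = b 0) (hb : b k = a 0) (t : ℕ) : a (t + k) = b t ∧ b (t + k) = a t := by
  induction t with
  | zero => simpa only [Nat.zero_add] using ⟨ha, hb⟩
  | succ t ih =>
    have hstep := hab (t + k)
    have hne := h.pivot_ne_tail t
    rw [Nat.cast_add, ZMod.natCast_self, add_zero] at hstep
    rw [show t + 1 + k = t + k + 1 by ring]
    grind [hab t]

theorem moveCount_of_moves_of_twist (hab : IsUnrolling v x y a b) (h : IsTriangleStrip e v x y)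
    {t : ℕ} (ha : a (t + k) = b t) (hmove : a t ≠ v t) :
    moveCount v a t k = moveCount v a (t + 1) k + 1 := by
  have hb : b t = v t := (hab.symm.stays_iff h t).2 hmove
  have hstay : a (t + k) = v ((t + k : ℕ) : ZMod k) := by
    rw [ha, hb, Nat.cast_add, ZMod.natCast_self, add_zero]
  have hwindow := (moveCount_succ v a t k).symm.trans (moveCount_succ' v a t k)
  rwa [if_pos hstay, if_neg hmove] at hwindow

end IsUnrolling

namespace IsTriangleStrip

variable {v x y : ZMod 7 → V} {e : ZMod 7 ⊕ ZMod 7 → Sym2 V}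

/-- The strip is an annulus whose two rims have total length `7`; a rim of positive length has
length at least `4`, so one rim is a single point. -/
theorem pivot_constant_of_annulus (h : IsTriangleStrip e v x y) (hab : IsUnrolling v x y a b)
    (ha : a 7 = a 0) (hb : b 7 = b 0) (j : ZMod 7) : v (j + 1) = v j := by
  wlog hzero : moveCount v a 0 7 = 0 generalizing a b
  · have hsum := hab.moveCount_add_moveCount h 0 7
    have hla := hab.moveCount_eq_zero_or_four_le h (n := 0) ha
    have hlb := hab.symm.moveCount_eq_zero_or_four_le h (n := 0) hb
    exact this hab.symm hb ha (by lia)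
  have hpivot (i : ZMod 7) : v i = a i.val := by
    simpa using (moveCount_eq_zero_iff.1 hzero i.val i.val_lt).symm
  have hside (i : ZMod 7) : a i.val = a 0 := by
    simpa using hab.eq_of_moveCount_eq_zero h (n := 0) (l := i.val)
      (moveCount_eq_zero_iff.2 fun t ht ↦ moveCount_eq_zero_iff.1 hzero t (ht.trans i.val_lt))
  rw [hpivot, hpivot, hside, hside]

/-- The strip is a Möbius band. In each window of `7` steps either side moves at least `3`, hence
at most `4` times, so that the two sides have to move alternately. -/
theorem pivot_succ_ne_of_twist (h : IsTriangleStrip e v x y) (hab : IsUnrolling v x y a b)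
    (ha : a 7 = b 0) (hb : b 7 = a 0) (t : ℕ) : v (t + 1) ≠ v t := by
  have htwist := hab.add_period_of_twist h ha hb
  have hthree_a (t : ℕ) : 3 ≤ moveCount v a t 7 := hab.three_le_moveCount h (htwist t).1
  have hthree_b (t : ℕ) : 3 ≤ moveCount v b t 7 := hab.symm.three_le_moveCount h (htwist t).2
  wlog hmove : a t ≠ v t generalizing a b
  · refine this hab.symm hb ha (fun t ↦ (htwist t).symm) hthree_b hthree_a ?_
    exact (hab.stays_iff h t).1 (not_not.1 hmove)
  have hstay : a (t + 1) = v (t + 1) := by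
    by_contra hmove'
    rw [← Nat.cast_succ] at hmove'
    have hfirst := hab.moveCount_of_moves_of_twist h (htwist t).1 hmove
    have hsecond := hab.moveCount_of_moves_of_twist h (htwist (t + 1)).1 hmove'
    have hsum := hab.moveCount_add_moveCount h t 7
    linarith [hthree_a (t + 1 + 1), hthree_b t]
  have hb_stay : b t = v t := (hab.symm.stays_iff h t).2 hmove
  rw [← hstay, ← hb_stay, ← hab.symm.succ_eq_of_stays h hb_stay]
  exact hab.side_ne h (t + 1)

theorem pivot_constant_or_pivot_succ_ne (h : IsTriangleStrip e v x y) :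
    (∀ j, v (j + 1) = v j) ∨ ∀ j, v (j + 1) ≠ v j := by
  obtain ⟨a, b, hab⟩ := h.exists_isUnrolling
  have hclosed : s(a 7, b 7) = s(a 0, b 0) := by
    rw [← hab.rung_eq h, ← hab.rung_eq h]
    rfl
  rcases Sym2.eq_iff.1 hclosed with ⟨ha, hb⟩ | ⟨ha, hb⟩
  · exact .inl (h.pivot_constant_of_annulus hab ha hb)
  · refine .inr fun j ↦ ?_
    simpa only [ZMod.natCast_zmod_val] using h.pivot_succ_ne_of_twist hab ha hb j.val

end IsTriangleStrip

end TriangleStrip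

section Labeling

variable {ι α β V W : Type*}

/-- The labeling `e` of `ι` by edges is, up to an injective renaming of the vertices,
the model labeling `ε`. -/
def IsCopy (ε : ι → Sym2 α) (e : ι → Sym2 V) : Prop :=
  ∃ φ : α → V, Function.Injective φ ∧ ∀ u, e u = (ε u).map φ

theorem IsCopy.meet_iff {ε : ι → Sym2 α} {e : ι → Sym2 V} (h : IsCopy ε e) (u w : ι) :
    (∃ p ∈ e u, p ∈ e w) ↔ ∃ p ∈ ε u, p ∈ ε w := by
  obtain ⟨φ, hφ, he⟩ := h
  simp only [he, Sym2.mem_map]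
  constructor
  · rintro ⟨_, ⟨p, hpu, rfl⟩, q, hqw, hqp⟩
    exact ⟨p, hpu, hφ hqp ▸ hqw⟩
  · rintro ⟨p, hpu, hpw⟩
    exact ⟨φ p, ⟨p, hpu, rfl⟩, p, hpw, rfl⟩

/-- The edge of `G` represented by the vertex `m u` of the triangular line graph `H` of `G`. -/
def edgeLabel {G : SimpleGraph V} {H : SimpleGraph W} (f : TriLine G ≃g H) (m : ι → W) (u : ι) :
    Sym2 V :=
  f.symm (m u)

variable {G : SimpleGraph V} {H : SimpleGraph W} (f : TriLine G ≃g H) {m : ι → W}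

theorem edgeLabel_mem_edgeSet (u : ι) : edgeLabel f m u ∈ G.edgeSet := (f.symm (m u)).2

theorem adj_of_edgeLabel_eq {u : ι} {p q : V} (h : edgeLabel f m u = s(p, q)) : G.Adj p q := by
  simpa only [h, SimpleGraph.mem_edgeSet] using edgeLabel_mem_edgeSet f (m := m) u

theorem edgeLabel_injective (hm : Function.Injective m) : Function.Injective (edgeLabel f m) :=
  Subtype.val_injective.comp (f.symm.injective.comp hm)

theorem edgePre_range_adj {p q : V} :
    (edgePre G f (Set.range m)).Adj p q ↔ ∃ u, edgeLabel f m u = s(p, q) := by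
  constructor
  · rintro ⟨-, d, hd, u, hu⟩
    exact ⟨u, by rw [edgeLabel, hu, f.symm_apply_apply, hd]⟩
  · rintro ⟨u, hu⟩
    exact ⟨adj_of_edgeLabel_eq f hu, f.symm (m u), hu, u, (f.apply_symm_apply _).symm⟩

theorem mem_verts_edgePre_range {p : V} :
    p ∈ (edgePre G f (Set.range m)).verts ↔ ∃ u, p ∈ edgeLabel f m u := by
  constructor
  · rintro ⟨q, d, hd, u, hu⟩
    exact ⟨u, by rw [edgeLabel, hu, f.symm_apply_apply, hd]; exact Sym2.mem_mk_left p q⟩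
  · rintro ⟨u, q, hq⟩
    exact ⟨q, f.symm (m u), hq, u, (f.apply_symm_apply _).symm⟩

theorem IsCopy.nonempty_iso {ε : ι → Sym2 α} (h : IsCopy ε (edgeLabel f m)) {A : SimpleGraph α}
    (hA : A.edgeSet = Set.range ε) (hcover : ∀ p, ∃ q, A.Adj p q) :
    Nonempty ((edgePre G f (Set.range m)).coe ≃g A) := by
  obtain ⟨φ, hφ, he⟩ := h
  have hadj (p q : α) : A.Adj p q ↔ ∃ u, ε u = s(p, q) := by
    rw [← SimpleGraph.mem_edgeSet, hA, Set.mem_range]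
  have hverts : Set.range φ = (edgePre G f (Set.range m)).verts := by
    ext z
    simp only [mem_verts_edgePre_range, he, Sym2.mem_map, Set.mem_range]
    constructor
    · rintro ⟨p, rfl⟩
      obtain ⟨q, hpq⟩ := hcover p
      obtain ⟨u, hu⟩ := (hadj p q).1 hpq
      exact ⟨u, p, hu ▸ Sym2.mem_mk_left p q, rfl⟩
    · rintro ⟨u, p, -, hp⟩
      exact ⟨p, hp⟩
  refine ⟨RelIso.symm ⟨(Equiv.ofInjective φ hφ).trans (Equiv.setCongr hverts), fun {p q} ↦ ?_⟩⟩
  change (edgePre G f (Set.range m)).Adj (φ p) (φ q) ↔ A.Adj p q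
  simp only [edgePre_range_adj, hadj, he, ← Sym2.map_mk, (Sym2.map.injective hφ).eq_iff]

end Labeling

section Models

/-- The labeling of the vertices of the `k`-sun by the edges of the `k`-wheel: the cycle of the
sun becomes the spokes, the added vertices become the rim. -/
def wheelLabel (k : ℕ) : ZMod k ⊕ ZMod k → Sym2 (Option (ZMod k))
  | .inl j => s(none, some j)
  | .inr j => s(some j, some (j + 1))

/-- The labeling of the vertices of the `k`-sun by the edges of the squared `k`-cycle: the cycle
of the sun becomes the cycle, the added vertices become the edges at distance two. -/
def squaredCycleLabel (k : ℕ) : ZMod k ⊕ ZMod k → Sym2 (ZMod k)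
  | .inl j => s(j, j + 1)
  | .inr j => s(j, j + 2)

theorem edgeSet_wheelGraph {k : ℕ} (hk : (1 : ZMod k) ≠ 0) :
    (wheelGraph k).edgeSet = Set.range (wheelLabel k) := by
  ext d
  induction d with
  | _ p q =>
    rw [Set.mem_range, SimpleGraph.mem_edgeSet, wheelGraph, SimpleGraph.fromRel_adj, Sum.exists]
    rcases p with _ | i <;> rcases q with _ | j <;> simp only [wheelLabel, Sym2.eq_iff] <;>
      grind [add_eq_left]

theorem edgeSet_squaredCycleGraph {k : ℕ} (hk : (2 : ZMod k) ≠ 0) :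
    (squaredCycleGraph k).edgeSet = Set.range (squaredCycleLabel k) := by
  ext d
  induction d with
  | _ p q =>
    rw [Set.mem_range, SimpleGraph.mem_edgeSet, squaredCycleGraph, SimpleGraph.fromRel_adj,
      Sum.exists]
    simp only [squaredCycleLabel, Sym2.eq_iff]
    grind

theorem wheelGraph_exists_adj (k : ℕ) (p : Option (ZMod k)) : ∃ q, (wheelGraph k).Adj p q := by
  cases p with
  | none => exact ⟨some 0, by simp [wheelGraph]⟩
  | some j => exact ⟨none, by simp [wheelGraph]⟩

theorem squaredCycleGraph_exists_adj {k : ℕ} (hk : (1 : ZMod k) ≠ 0) (p : ZMod k) :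
    ∃ q, (squaredCycleGraph k).Adj p q :=
  ⟨p + 1, by simp [squaredCycleGraph, hk]⟩

theorem isEmpty_wheelGraph_iso_squaredCycleGraph (k : ℕ) [NeZero k] :
    IsEmpty (wheelGraph k ≃g squaredCycleGraph k) := by
  refine ⟨fun g ↦ ?_⟩
  simpa only [Fintype.card_option, Nat.succ_ne_self] using g.card_eq

variable {k : ℕ} {V : Type*} {e : ZMod k ⊕ ZMod k → Sym2 V} {v x y : ZMod k → V}

theorem IsTriangleStrip.isCopy_wheelLabel [NeZero k] (h : IsTriangleStrip e v x y)
    (hv : ∀ j, v (j + 1) = v j) : IsCopy (wheelLabel k) e := by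
  have hconst (j : ZMod k) : v j = v 0 := by
    obtain ⟨n, rfl⟩ := ZMod.natCast_zmod_surjective j
    induction n with
    | zero => rw [Nat.cast_zero]
    | succ n ih => rw [Nat.cast_succ, hv, ih]
  have hrung (j : ZMod k) : e (.inl j) = s(v 0, x j) := by rw [h.rung, hconst]
  have hx (j : ZMod k) : x (j + 1) = y j := by
    rw [← Sym2.congr_right (a := v 0), ← hrung, h.rung_succ, hconst]
  refine ⟨fun o ↦ o.elim (v 0) x, ?_, ?_⟩
  · refine Option.injective_iff.2 ⟨fun i j (hij : x i = x j) ↦ ?_, ?_⟩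
    · exact Sum.inl_injective (h.injective (by rw [hrung, hrung, hij]))
    · rintro ⟨j, hj⟩
      exact h.pivot_ne_tail j ((hconst j).trans hj.symm)
  · rintro (j | j)
    · exact hrung j
    · simp only [h.rim, wheelLabel, Sym2.map_mk, Option.elim, hx]

theorem IsTriangleStrip.isCopy_squaredCycleLabel {e : ZMod 7 ⊕ ZMod 7 → Sym2 V}
    {v x y : ZMod 7 → V} (h : IsTriangleStrip e v x y) (hv : ∀ j, v (j + 1) ≠ v j) :
    IsCopy (squaredCycleLabel 7) e := by
  have hsucc (j : ZMod 7) : v (j + 1) = y j ∧ x (j + 1) = v j :=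
    (h.pivot_succ j).resolve_left fun hj ↦ hv j hj.1
  have hcycle (j : ZMod 7) : e (.inl j) = s(x j, x (j + 1)) := by
    rw [h.rung, (hsucc j).2, Sym2.eq_swap]
  have hchord (j : ZMod 7) : e (.inr j) = s(x j, x (j + 2)) := by
    rw [h.rim, ← (hsucc j).1, ← (hsucc (j + 1)).2, add_assoc, one_add_one_eq_two]
  have hne_one (j : ZMod 7) : x j ≠ x (j + 1) := by
    simpa only [hcycle, Sym2.mk_isDiag_iff] using h.not_isDiag (.inl j)
  have hne_two (j : ZMod 7) : x j ≠ x (j + 2) := by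
    simpa only [hchord, Sym2.mk_isDiag_iff] using h.not_isDiag (.inr j)
  have hne_three (j : ZMod 7) : x j ≠ x (j + 3) := by
    intro hj
    refine Sum.inl_ne_inr (h.injective (a₁ := .inl j) (a₂ := .inr (j + 1)) ?_)
    rw [hcycle, hchord, add_assoc, show (1 + 2 : ZMod 7) = 3 from rfl, ← hj, Sym2.eq_swap]
  have hdist (i j : ZMod 7) : i = j ∨ j = i + 1 ∨ j = i + 2 ∨ j = i + 3 ∨
      i = j + 1 ∨ i = j + 2 ∨ i = j + 3 := by
    revert i j
    decide
  refine ⟨x, fun i j hij ↦ ?_, ?_⟩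
  · rcases hdist i j with rfl | rfl | rfl | rfl | rfl | rfl | rfl
    · rfl
    · exact absurd hij (hne_one _)
    · exact absurd hij (hne_two _)
    · exact absurd hij (hne_three _)
    · exact absurd hij.symm (hne_one _)
    · exact absurd hij.symm (hne_two _)
    · exact absurd hij.symm (hne_three _)
  · rintro (j | j)
    · exact hcycle j
    · exact hchord j

theorem IsTriangleStrip.isCopy_wheelLabel_or_squaredCycleLabel {e : ZMod 7 ⊕ ZMod 7 → Sym2 V}
    {v x y : ZMod 7 → V} (h : IsTriangleStrip e v x y) :
    IsCopy (wheelLabel 7) e ∨ IsCopy (squaredCycleLabel 7) e :=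
  h.pivot_constant_or_pivot_succ_ne.imp h.isCopy_wheelLabel h.isCopy_squaredCycleLabel

end Models

section Sun

variable {k : ℕ} {i j : ZMod k} {z : ZMod k ⊕ ZMod k}

theorem sunGraph_adj_inl_inl :
    (sunGraph k).Adj (.inl i) (.inl j) ↔ i ≠ j ∧ (j = i + 1 ∨ i = j + 1) := by
  simp [sunGraph]

theorem sunGraph_adj_inl_inr : (sunGraph k).Adj (.inl i) (.inr j) ↔ i = j ∨ i = j + 1 := by
  simp [sunGraph, ← and_or_left]

theorem sunGraph_not_adj_inr_inr : ¬ (sunGraph k).Adj (.inr i) (.inr j) := by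
  simp [sunGraph]

theorem sunGraph_common_neighbor (hk₂ : (2 : ZMod k) ≠ 0) (hk₃ : (3 : ZMod k) ≠ 0)
    (hz : (sunGraph k).Adj (.inl j) z) (hz' : (sunGraph k).Adj (.inl (j + 1)) z) :
    z = .inr j := by
  rcases z with i | i
  · rw [sunGraph_adj_inl_inl] at hz hz'
    grind
  · rw [sunGraph_adj_inl_inr] at hz hz'
    grind

variable {V W : Type*} {G : SimpleGraph V} {H : SimpleGraph W} (f : TriLine G ≃g H)

theorem adj_iff_exists_triangle {ι : Type*} {m : ι → W} {u w : ι} :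
    H.Adj (m u) (m w) ↔ ∃ p q r, G.Adj p q ∧ G.Adj q r ∧ G.Adj p r ∧
      edgeLabel f m u = s(p, q) ∧ edgeLabel f m w = s(q, r) :=
  f.symm.map_adj_iff.symm

theorem exists_isTriangleStrip (hk₂ : (2 : ZMod k) ≠ 0) (hk₃ : (3 : ZMod k) ≠ 0)
    (m : sunGraph k ↪g H)
    (hm : ∀ j z, H.Adj (m (.inl j)) z → H.Adj (m (.inl (j + 1))) z → z ∈ Set.range m) :
    ∃ v x y, IsTriangleStrip (edgeLabel f m) v x y := by
  have htriangle (j : ZMod k) : ∃ x v y, edgeLabel f m (.inl j) = s(v, x) ∧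
      edgeLabel f m (.inl (j + 1)) = s(v, y) ∧ edgeLabel f m (.inr j) = s(x, y) := by
    have hadj : H.Adj (m (.inl j)) (m (.inl (j + 1))) := by
      rw [m.map_adj_iff, sunGraph_adj_inl_inl]
      exact ⟨fun hj ↦ hk₂ (by linear_combination -2 * hj), .inl rfl⟩
    obtain ⟨x, v, y, hxv, hvy, hxy, hj, hj'⟩ := (adj_iff_exists_triangle f).1 hadj
    have hjd : H.Adj (m (.inl j)) (f ⟨s(x, y), hxy⟩) := f.symm_apply_rel.1
      ⟨v, x, y, hxv.symm, hxy, hvy, hj.trans Sym2.eq_swap, rfl⟩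
    have hjd' : H.Adj (m (.inl (j + 1))) (f ⟨s(x, y), hxy⟩) := f.symm_apply_rel.1
      ⟨v, y, x, hvy, hxy.symm, hxv.symm, hj', Sym2.eq_swap⟩
    obtain ⟨z, hz⟩ := hm j _ hjd hjd'
    rw [← hz, m.map_adj_iff] at hjd hjd'
    obtain rfl := sunGraph_common_neighbor hk₂ hk₃ hjd hjd'
    exact ⟨x, v, y, hj.trans Sym2.eq_swap, hj', by rw [edgeLabel, hz, f.symm_apply_apply]⟩
  choose x v y hrung hrung_succ hrim using htriangle
  refine ⟨v, x, y, hrung, hrung_succ, hrim, edgeLabel_injective f m.injective,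
    fun u ↦ G.not_isDiag_of_mem_edgeSet (edgeLabel_mem_edgeSet f u), ?_⟩
  intro i j u p q r hpq hqr hpr
  exact sunGraph_not_adj_inr_inr (m.map_adj_iff.1 ((adj_iff_exists_triangle f).2
    ⟨p, q, r, adj_of_edgeLabel_eq f hpq, adj_of_edgeLabel_eq f hqr, adj_of_edgeLabel_eq f hpr,
      hpq, hqr⟩))

end Sun

section Gluing

theorem eqvGen_iff_of_biUnique {α : Type*} {r : α → α → Prop} (hr : Relator.BiUnique r)
    (hchain : ∀ x y z, r x y → ¬ r y z) {x y : α} :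
    Relation.EqvGen r x y ↔ x = y ∨ r x y ∨ r y x := by
  constructor
  · intro h
    induction h with
    | rel x y hxy => exact .inr (.inl hxy)
    | refl x => exact .inl rfl
    | symm x y _ ih => exact ih.imp Eq.symm Or.symm
    | trans x y z _ _ hxy hyz =>
      rcases hxy with rfl | hxy | hyx
      · exact hyz
      · rcases hyz with rfl | hyz | hzy
        · exact .inr (.inl hxy)
        · exact absurd hyz (hchain _ _ _ hxy)
        · exact .inl (hr.1 hxy hzy)
      · rcases hyz with rfl | hyz | hzy
        · exact .inr (.inr hyx)
        · exact .inl (hr.2 hyx hyz)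
        · exact absurd hyx (hchain _ _ _ hzy)
  · rintro (rfl | h | h)
    · exact .refl x
    · exact .rel x y h
    · exact .symm y x (.rel y x h)

/-- The pairs of vertices identified by the NOT gadget of the wire, the first one in the NOT bowtie
of the preceding sun and the second one in the ROOT bowtie of the following sun. -/
def notGadget : Finset (SunV × SunV) :=
  {(.inl 5, .inl 1), (.inl 4, .inl 0), (.inr 4, .inr 0), (.inr 5, .inl 2), (.inl 6, .inr 1)}

variable {k : ℕ}

theorem wireRel_iff {x y : Fin (k + 1) × SunV} :
    wireRel k x y ↔ (y.1 : ℕ) = x.1 + 1 ∧ (x.2, y.2) ∈ notGadget := by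
  obtain ⟨i, u⟩ := x
  obtain ⟨j, w⟩ := y
  simp only [wireRel, notGadget, Finset.mem_insert, Finset.mem_singleton, Prod.mk.injEq]
  constructor
  · rintro ⟨l, h⟩
    grind [Fin.val_castSucc]
  · rintro ⟨hij, h⟩
    refine ⟨⟨i, by lia⟩, ?_⟩
    have hi : i = Fin.castSucc ⟨i, by lia⟩ := rfl
    have hj : j = Fin.succ ⟨i, by lia⟩ := Fin.ext hij
    grind

instance : DecidableRel (sunGraph 7).Adj := by
  unfold sunGraph
  infer_instance

section NotGadget

variable {u u' w w' z : SunV}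

theorem notGadget_eq_iff (hu : (u, u') ∈ notGadget) (hw : (w, w') ∈ notGadget) :
    u = w ↔ u' = w' := by
  have h : ∀ p ∈ notGadget, ∀ q ∈ notGadget, p.1 = q.1 ↔ p.2 = q.2 := by
    decide +kernel
  exact h _ hu _ hw

theorem notGadget_snd_ne_fst (hu : (u, u') ∈ notGadget) (hw : (w, w') ∈ notGadget) : u' ≠ w := by
  have h : ∀ p ∈ notGadget, ∀ q ∈ notGadget, p.2 ≠ q.1 := by decide +kernel
  exact h _ hu _ hw

theorem notGadget_adj_iff (hu : (u, u') ∈ notGadget) (hw : (w, w') ∈ notGadget) :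
    (sunGraph 7).Adj u w ↔ (sunGraph 7).Adj u' w' := by
  have h : ∀ p ∈ notGadget, ∀ q ∈ notGadget,
      (sunGraph 7).Adj p.1 q.1 ↔ (sunGraph 7).Adj p.2 q.2 := by decide +kernel
  exact h _ hu _ hw

theorem notGadget_common_neighbor_fst (hu : (u, u') ∈ notGadget) (hw : (w, w') ∈ notGadget)
    (huw : (sunGraph 7).Adj u w) (huz : (sunGraph 7).Adj u z) (hwz : (sunGraph 7).Adj w z) :
    z ∈ notGadget.image Prod.fst := by
  have h : ∀ p ∈ notGadget, ∀ q ∈ notGadget, (sunGraph 7).Adj p.1 q.1 → ∀ z,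
      (sunGraph 7).Adj p.1 z → (sunGraph 7).Adj q.1 z → z ∈ notGadget.image Prod.fst := by
    decide +kernel
  exact h _ hu _ hw huw z huz hwz

theorem notGadget_common_neighbor_snd (hu : (u, u') ∈ notGadget) (hw : (w, w') ∈ notGadget)
    (huw : (sunGraph 7).Adj u' w') (huz : (sunGraph 7).Adj u' z) (hwz : (sunGraph 7).Adj w' z) :
    z ∈ notGadget.image Prod.snd := by
  have h : ∀ p ∈ notGadget, ∀ q ∈ notGadget, (sunGraph 7).Adj p.2 q.2 → ∀ z,
      (sunGraph 7).Adj p.2 z → (sunGraph 7).Adj q.2 z → z ∈ notGadget.image Prod.snd := by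
    decide +kernel
  exact h _ hu _ hw huw z huz hwz

end NotGadget

/-- The vertex of the wire represented by the vertex `u` of its `i`-th sun. -/
def wireVertex (k : ℕ) (i : Fin (k + 1)) (u : SunV) :
    Quotient (Relation.EqvGen.setoid (wireRel k)) :=
  Quotient.mk _ (i, u)

theorem wireVertex_eq_iff {i j : Fin (k + 1)} {u w : SunV} :
    wireVertex k i u = wireVertex k j w ↔ i = j ∧ u = w ∨
      (j : ℕ) = i + 1 ∧ (u, w) ∈ notGadget ∨ (i : ℕ) = j + 1 ∧ (w, u) ∈ notGadget := by
  have hunique : Relator.BiUnique (wireRel k) := by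
    constructor
    · intro x y z hxz hyz
      rw [wireRel_iff] at hxz hyz
      exact Prod.ext (Fin.ext (by lia)) ((notGadget_eq_iff hxz.2 hyz.2).2 rfl)
    · intro x y z hxy hxz
      rw [wireRel_iff] at hxy hxz
      exact Prod.ext (Fin.ext (by lia)) ((notGadget_eq_iff hxy.2 hxz.2).1 rfl)
  have hchain (x y z) (hxy : wireRel k x y) (hyz : wireRel k y z) : False :=
    notGadget_snd_ne_fst (wireRel_iff.1 hxy).2 (wireRel_iff.1 hyz).2 rfl
  rw [wireVertex, wireVertex, Quotient.eq, Relation.EqvGen.setoid]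
  refine (eqvGen_iff_of_biUnique hunique hchain).trans ?_
  rw [Prod.mk.injEq, wireRel_iff, wireRel_iff]

theorem glue_adj_iff {α : Type*} {G : SimpleGraph α} {R : α → α → Prop}
    {p q : Quotient (Relation.EqvGen.setoid R)} :
    (Glue G R).Adj p q ↔ p ≠ q ∧ ∃ a b, G.Adj a b ∧ ⟦a⟧ = p ∧ ⟦b⟧ = q := by
  rw [Glue, SimpleGraph.fromRel_adj]
  refine and_congr_right fun _ ↦ ⟨?_, ?_⟩
  · rintro (⟨a, b, hab, rfl, rfl⟩ | ⟨b, a, hba, rfl, rfl⟩)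
    · exact ⟨a, b, hab, rfl, rfl⟩
    · exact ⟨a, b, hba.symm, rfl, rfl⟩
  · rintro ⟨a, b, hab, rfl, rfl⟩
    exact .inl ⟨a, b, hab, rfl, rfl⟩

theorem wireBase_adj_iff {x y : Fin (k + 1) × SunV} :
    (wireBase k).Adj x y ↔ x.1 = y.1 ∧ (sunGraph 7).Adj x.2 y.2 := by
  rw [wireBase, SimpleGraph.fromRel_adj, (sunGraph 7).adj_comm y.2, @eq_comm _ y.1, or_self,
    and_iff_right_iff_imp]
  exact fun h hxy ↦ h.2.ne (congrArg Prod.snd hxy)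

theorem wireVertex_injective (i : Fin (k + 1)) : Function.Injective (wireVertex k i) := by
  intro u w h
  grind [wireVertex_eq_iff]

theorem wireGraph_adj_iff {p q : Quotient (Relation.EqvGen.setoid (wireRel k))} :
    (wireGraph k).Adj p q ↔ ∃ i u w,
      (sunGraph 7).Adj u w ∧ wireVertex k i u = p ∧ wireVertex k i w = q := by
  rw [wireGraph, glue_adj_iff]
  constructor
  · rintro ⟨-, ⟨i, u⟩, ⟨j, w⟩, huw, rfl, rfl⟩
    obtain ⟨rfl : i = j, huw⟩ := wireBase_adj_iff.1 huw
    exact ⟨i, u, w, huw, rfl, rfl⟩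
  · rintro ⟨i, u, w, huw, rfl, rfl⟩
    exact ⟨(wireVertex_injective i).ne huw.ne, (i, u), (i, w), wireBase_adj_iff.2 ⟨rfl, huw⟩,
      rfl, rfl⟩

theorem wireGraph_adj_wireVertex_iff {i : Fin (k + 1)} {u w : SunV} :
    (wireGraph k).Adj (wireVertex k i u) (wireVertex k i w) ↔ (sunGraph 7).Adj u w := by
  refine wireGraph_adj_iff.trans ⟨?_, fun h ↦ ⟨i, u, w, h, rfl, rfl⟩⟩
  rintro ⟨j, u', w', hadj, hu, hw⟩
  rw [wireVertex_eq_iff] at hu hw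
  grind [notGadget_adj_iff]

theorem wireGraph_common_neighbor {i : Fin (k + 1)} {u w : SunV}
    {z : Quotient (Relation.EqvGen.setoid (wireRel k))} (huw : (sunGraph 7).Adj u w)
    (hu : (wireGraph k).Adj (wireVertex k i u) z) (hw : (wireGraph k).Adj (wireVertex k i w) z) :
    z ∈ Set.range (wireVertex k i) := by
  rw [wireGraph_adj_iff] at hu hw
  obtain ⟨j, u', z', huz, hu', rfl⟩ := hu
  obtain ⟨l, w', z'', hwz, hw', hz⟩ := hw
  by_cases hj : j = i
  · exact ⟨z', hj ▸ rfl⟩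
  by_cases hl : l = i
  · exact ⟨z'', hl ▸ hz⟩
  rw [wireVertex_eq_iff] at hu' hw' hz
  obtain ⟨rfl, rfl⟩ : l = j ∧ z'' = z' := by
    rcases hz with hz | hz | hz
    · exact hz
    all_goals lia
  simp only [Set.mem_range, wireVertex_eq_iff]
  rcases hu' with ⟨h, -⟩ | ⟨hil, hu⟩ | ⟨hli, hu⟩
  · exact absurd h hj
  · replace hw : (w', w) ∈ notGadget := by grind
    rw [← notGadget_adj_iff hu hw] at huw
    obtain ⟨r, hr, rfl⟩ := Finset.mem_image.1 (notGadget_common_neighbor_fst hu hw huw huz hwz)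
    exact ⟨r.2, .inr (.inr ⟨hil, hr⟩)⟩
  · replace hw : (w, w') ∈ notGadget := by grind
    rw [notGadget_adj_iff hu hw] at huw
    obtain ⟨r, hr, rfl⟩ := Finset.mem_image.1 (notGadget_common_neighbor_snd hu hw huw huz hwz)
    exact ⟨r.1, .inr (.inl ⟨hli, hr⟩)⟩

/-- The `i`-th sun of the wire as an induced subgraph of the wire. -/
def wireSun (k : ℕ) (i : Fin (k + 1)) : sunGraph 7 ↪g wireGraph k where
  toFun := wireVertex k i
  inj' := wireVertex_injective i
  map_rel_iff' := wireGraph_adj_wireVertex_iff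

end Gluing

section Wire

theorem isCopy_wheelLabel_iff {V : Type*} {e : SunV → Sym2 V}
    (he : IsCopy (wheelLabel 7) e ∨ IsCopy (squaredCycleLabel 7) e) :
    IsCopy (wheelLabel 7) e ↔ ∃ p ∈ e (.inl 0), p ∈ e (.inl 2) :=
  ⟨fun h ↦ (h.meet_iff _ _).2 (by decide),
    fun hmeet ↦ he.resolve_right fun h ↦ absurd ((h.meet_iff _ _).1 hmeet) (by decide)⟩

theorem not_isCopy_wheelLabel_iff {V : Type*} {e : SunV → Sym2 V}
    (he : IsCopy (wheelLabel 7) e ∨ IsCopy (squaredCycleLabel 7) e) :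
    ¬ IsCopy (wheelLabel 7) e ↔ ∃ p ∈ e (.inl 4), p ∈ e (.inr 5) :=
  ⟨fun h ↦ ((he.resolve_left h).meet_iff _ _).2 (by decide),
    fun hmeet h ↦ absurd ((h.meet_iff _ _).1 hmeet) (by decide)⟩

variable {k : ℕ} {V : Type*} {G : SimpleGraph V} (f : TriLine G ≃g wireGraph k)

theorem isCopy_wheelLabel_or_squaredCycleLabel_wireSun (i : Fin (k + 1)) :
    IsCopy (wheelLabel 7) (edgeLabel f (wireSun k i)) ∨
      IsCopy (squaredCycleLabel 7) (edgeLabel f (wireSun k i)) := by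
  obtain ⟨v, x, y, h⟩ := exists_isTriangleStrip f (by decide) (by decide) (wireSun k i)
    fun j z ↦ wireGraph_common_neighbor (sunGraph_adj_inl_inl.2 ⟨by grind, .inl rfl⟩)
  exact h.isCopy_wheelLabel_or_squaredCycleLabel

theorem isCopy_wheelLabel_succ_iff (i : Fin k) :
    IsCopy (wheelLabel 7) (edgeLabel f (wireSun k i.succ)) ↔
      ¬ IsCopy (wheelLabel 7) (edgeLabel f (wireSun k i.castSucc)) := by
  have h₄ : wireSun k i.castSucc (.inl 4) = wireSun k i.succ (.inl 0) :=
    wireVertex_eq_iff.2 (.inr (.inl ⟨rfl, by decide⟩))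
  have h₅ : wireSun k i.castSucc (.inr 5) = wireSun k i.succ (.inl 2) :=
    wireVertex_eq_iff.2 (.inr (.inl ⟨rfl, by decide⟩))
  rw [isCopy_wheelLabel_iff (isCopy_wheelLabel_or_squaredCycleLabel_wireSun f _),
    not_isCopy_wheelLabel_iff (isCopy_wheelLabel_or_squaredCycleLabel_wireSun f _)]
  simp only [edgeLabel, h₄, h₅]

theorem isCopy_wheelLabel_wireSun_iff (i : Fin (k + 1)) :
    IsCopy (wheelLabel 7) (edgeLabel f (wireSun k i)) ↔
      (IsCopy (wheelLabel 7) (edgeLabel f (wireSun k 0)) ↔ Even (i : ℕ)) := by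
  induction i using Fin.induction with
  | zero => simp only [Fin.val_zero, Even.zero, iff_true]
  | succ i ih =>
    rw [isCopy_wheelLabel_succ_iff, ih, Fin.val_succ, Nat.even_add_one, Fin.val_castSucc]
    tauto

theorem nonempty_iso_wheelGraph {i : Fin (k + 1)}
    (h : IsCopy (wheelLabel 7) (edgeLabel f (wireSun k i))) :
    Nonempty ((edgePre G f (wireVerts k i)).coe ≃g wheelGraph 7) :=
  h.nonempty_iso f (edgeSet_wheelGraph (by decide)) (wheelGraph_exists_adj 7)

theorem nonempty_iso_squaredCycleGraph {i : Fin (k + 1)}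
    (h : IsCopy (squaredCycleLabel 7) (edgeLabel f (wireSun k i))) :
    Nonempty ((edgePre G f (wireVerts k i)).coe ≃g squaredCycleGraph 7) :=
  h.nonempty_iso f (edgeSet_squaredCycleGraph (by decide))
    (squaredCycleGraph_exists_adj (by decide))

theorem nonempty_iso_wheelGraph_iff {i : Fin (k + 1)} :
    Nonempty ((edgePre G f (wireVerts k i)).coe ≃g wheelGraph 7) ↔
      IsCopy (wheelLabel 7) (edgeLabel f (wireSun k i)) := by
  refine ⟨fun ⟨g⟩ ↦ ?_, nonempty_iso_wheelGraph f⟩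
  refine (isCopy_wheelLabel_or_squaredCycleLabel_wireSun f i).resolve_right fun h ↦ ?_
  obtain ⟨g'⟩ := nonempty_iso_squaredCycleGraph f h
  exact (isEmpty_wheelGraph_iso_squaredCycleGraph 7).false (g.symm.trans g')

theorem nonempty_iso_wireVerts_iff (i j : Fin (k + 1)) :
    Nonempty ((edgePre G f (wireVerts k i)).coe ≃g (edgePre G f (wireVerts k j)).coe) ↔
      (IsCopy (wheelLabel 7) (edgeLabel f (wireSun k i)) ↔
        IsCopy (wheelLabel 7) (edgeLabel f (wireSun k j))) := by
  constructor
  · rintro ⟨g⟩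
    rw [← nonempty_iso_wheelGraph_iff, ← nonempty_iso_wheelGraph_iff]
    exact ⟨fun ⟨h⟩ ↦ ⟨g.symm.trans h⟩, fun ⟨h⟩ ↦ ⟨g.trans h⟩⟩
  · intro hij
    by_cases hi : IsCopy (wheelLabel 7) (edgeLabel f (wireSun k i))
    · obtain ⟨g⟩ := nonempty_iso_wheelGraph f hi
      obtain ⟨g'⟩ := nonempty_iso_wheelGraph f (hij.1 hi)
      exact ⟨g.trans g'.symm⟩
    · have hj := mt hij.2 hi
      obtain ⟨g⟩ := nonempty_iso_squaredCycleGraph f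
        ((isCopy_wheelLabel_or_squaredCycleLabel_wireSun f i).resolve_left hi)
      obtain ⟨g'⟩ := nonempty_iso_squaredCycleGraph f
        ((isCopy_wheelLabel_or_squaredCycleLabel_wireSun f j).resolve_left hj)
      exact ⟨g.trans g'.symm⟩

end Wire

theorem wire_preimages_general (k : ℕ) {V : Type*} (G : SimpleGraph V)
    (f : TriLine G ≃g wireGraph k) (i : Fin (k + 1)) :
    (Nonempty ((edgePre G f (wireVerts k i)).coe ≃g wheelGraph 7) ∨
      Nonempty ((edgePre G f (wireVerts k i)).coe ≃g squaredCycleGraph 7)) ∧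
    (Nonempty ((edgePre G f (wireVerts k i)).coe ≃g (edgePre G f (wireVerts k 0)).coe) ↔
      Even (i : ℕ)) := by
  have htype := isCopy_wheelLabel_or_squaredCycleLabel_wireSun f i
  refine ⟨htype.imp (nonempty_iso_wheelGraph f) (nonempty_iso_squaredCycleGraph f), ?_⟩
  rw [nonempty_iso_wireVerts_iff, isCopy_wheelLabel_wireSun_iff f i]
  tauto

/-- For any preimage `G` of a wire `H₀, …, H_k` of 7-suns, each `T⁻¹(H_i)` is a 7-wheel
or a squared 7-cycle, and `T⁻¹(H_i)` is isomorphic to `T⁻¹(H₀)` iff `i` is even. -/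
theorem wire_preimages (k : ℕ) {V : Type} [Fintype V] (G : SimpleGraph V)
    (f : TriLine G ≃g wireGraph k) (i : Fin (k + 1)) :
    (Nonempty ((edgePre G f (wireVerts k i)).coe ≃g wheelGraph 7) ∨
      Nonempty ((edgePre G f (wireVerts k i)).coe ≃g squaredCycleGraph 7)) ∧
    (Nonempty ((edgePre G f (wireVerts k i)).coe ≃g (edgePre G f (wireVerts k 0)).coe) ↔
      Even (i : ℕ)) :=
  wire_preimages_general k G f i
end

section
/- Let G be a finite simple graph such that every edge of T(G) lies in exactly one triangle of T(G). Then G contains no clique of size four, i.e., G has no subgraph isomorphic to K₄. -/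
open SimpleGraph

/-!
Let `a`, `b`, `c`, `d` be the vertices of a `K₄` in `G`. The adjacent vertices `ba` and `bc` of
`T(G)` have two distinct common neighbours there: the third side `ac` of the triangle `abc`, and
the remaining edge `bd` at `b`, which lies in the triangles `abd` and `bcd`.
-/

theorem hasSubgraphIso_iff_isContained {α β : Type*} {A : SimpleGraph α} {B : SimpleGraph β} :
    HasSubgraphIso A B ↔ A ⊑ B :=
  ⟨fun ⟨f, hf, hadj⟩ => ⟨⟨⟨f, hadj _ _⟩, hf⟩⟩,
    fun ⟨f⟩ => ⟨f, f.injective, fun _ _ => f.toHom.map_adj⟩⟩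

theorem hasSubgraphIso_completeGraph_iff {V : Type*} {G : SimpleGraph V} {n : ℕ} :
    HasSubgraphIso (completeGraph (Fin n)) G ↔ ¬ G.CliqueFree n := by
  rw [hasSubgraphIso_iff_isContained, cliqueFree_iff, not_isEmpty_iff]

namespace TriLine

variable {V : Type*} {G : SimpleGraph V} {a b c d : V}

theorem adj_of_shared_endpoint {e₁ e₂ : G.edgeSet} (he₁ : (e₁ : Sym2 V) = s(b, a))
    (he₂ : (e₂ : Sym2 V) = s(b, c)) (hac : G.Adj a c) : (TriLine G).Adj e₁ e₂ :=
  have hba : G.Adj b a := G.mem_edgeSet.1 (he₁ ▸ e₁.2)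
  have hbc : G.Adj b c := G.mem_edgeSet.1 (he₂ ▸ e₂.2)
  ⟨a, b, c, hba.symm, hbc, hac, he₁.trans Sym2.eq_swap, he₂⟩

theorem thirdSide_mem_commonNeighbors (hba : G.Adj b a) (hbc : G.Adj b c) (hac : G.Adj a c) :
    (⟨s(a, c), hac⟩ : G.edgeSet) ∈
      (TriLine G).commonNeighbors ⟨s(b, a), hba⟩ ⟨s(b, c), hbc⟩ :=
  ⟨adj_of_shared_endpoint Sym2.eq_swap rfl hbc,
    adj_of_shared_endpoint Sym2.eq_swap Sym2.eq_swap hba⟩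

theorem spoke_mem_commonNeighbors (hba : G.Adj b a) (hbc : G.Adj b c) (hbd : G.Adj b d)
    (had : G.Adj a d) (hcd : G.Adj c d) :
    (⟨s(b, d), hbd⟩ : G.edgeSet) ∈
      (TriLine G).commonNeighbors ⟨s(b, a), hba⟩ ⟨s(b, c), hbc⟩ :=
  ⟨adj_of_shared_endpoint rfl rfl had, adj_of_shared_endpoint rfl rfl hcd⟩

theorem commonNeighbors_nontrivial (hba : G.Adj b a) (hbc : G.Adj b c) (hbd : G.Adj b d)
    (hac : G.Adj a c) (had : G.Adj a d) (hcd : G.Adj c d) :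
    ((TriLine G).commonNeighbors ⟨s(b, a), hba⟩ ⟨s(b, c), hbc⟩).Nontrivial := by
  refine ⟨_, thirdSide_mem_commonNeighbors hba hbc hac,
    _, spoke_mem_commonNeighbors hba hbc hbd had hcd, fun heq => ?_⟩
  have hedge : s(a, c) = s(b, d) := congrArg Subtype.val heq
  have ha : a ∈ s(b, d) := hedge ▸ Sym2.mem_mk_left a c
  exact (Sym2.mem_iff.1 ha).elim hba.ne' had.ne

end TriLine

theorem no_K4_of_triLine_edges_in_unique_triangle_general {V : Type*} (G : SimpleGraph V)
    (h : ∀ e₁ e₂ : G.edgeSet, (TriLine G).Adj e₁ e₂ →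
      ((TriLine G).commonNeighbors e₁ e₂).Subsingleton) :
    G.CliqueFree 4 := by
  refine cliqueFree_iff.2 ⟨fun f => ?_⟩
  have hadj {i j : Fin 4} (hij : i ≠ j) : G.Adj (f i) (f j) := f.toHom.map_adj hij
  have h10 := hadj (show 1 ≠ 0 by decide)
  have h12 := hadj (show 1 ≠ 2 by decide)
  have h13 := hadj (show 1 ≠ 3 by decide)
  have h02 := hadj (show 0 ≠ 2 by decide)
  have h03 := hadj (show 0 ≠ 3 by decide)
  have h23 := hadj (show 2 ≠ 3 by decide)
  exact (TriLine.commonNeighbors_nontrivial h10 h12 h13 h02 h03 h23).not_subsingleton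
    (h _ _ (TriLine.adj_of_shared_endpoint rfl rfl h02))

/-- If every edge of `T(G)` lies in exactly one triangle of `T(G)`, then `G` contains
no clique of size four. -/
theorem no_K4_of_triLine_edges_in_unique_triangle {V : Type} [Fintype V]
    (G : SimpleGraph V)
    (h : ∀ e₁ e₂ : G.edgeSet, (TriLine G).Adj e₁ e₂ →
      ∃! e₃ : G.edgeSet, (TriLine G).Adj e₁ e₃ ∧ (TriLine G).Adj e₂ e₃) :
    ¬ HasSubgraphIso (completeGraph (Fin 4)) G := by
  rw [hasSubgraphIso_completeGraph_iff, not_not]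
  exact no_K4_of_triLine_edges_in_unique_triangle_general G fun e₁ e₂ he _ h₃ _ h₄ =>
    (h e₁ e₂ he).unique h₃ h₄
end
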